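/- Let Ω = {ω₁,ω₂,ω₃} with Σ₀ = Σ₁ = Σ₂ the powerset of Ω. Let π₀ assign probabilities (0, 1/3, 2/3), π₁ assign (1, 0, 0), and π₂ assign (0, 2/3, 1/3) to (ω₁,ω₂,ω₃). Then (π₀,π₁) satisfies extended Bayesianism and (π₁,π₂) satisfies extended Bayesianism, but (π₀,π₂) does not satisfy extended Bayesianism. -/

import Mathlib

open MeasureTheory Set ENNReal

/-- The support of a measure `π` on `(Ω, m)`: the intersection of all `m`-measurable
sets of `π`-measure one. -/
def spt {Ω : Type*} (m : MeasurableSpace Ω) (π : @Measure Ω m) : Set Ω :=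
  ⋂₀ {E : Set Ω | @MeasurableSet Ω m E ∧ π E = 1}

/-- The outer measure on richer events induced by a measure `π` on `(Ω, m)`:
`π*(E) = inf {π F : F m-measurable, E ⊆ F}`. -/
noncomputable def outerM {Ω : Type*} (m : MeasurableSpace Ω) (π : @Measure Ω m)
    (E : Set Ω) : ℝ≥0∞ :=
  ⨅ (F : Set Ω) (_ : @MeasurableSet Ω m F ∧ E ⊆ F), π F

/-- Extended Bayesianism: there is a probability measure `π̄` on the finer σ-algebra `m1`
extending `π₀` (EB1) such that, whenever `π₀*(S₁) > 0`, `π̄(S₁) > 0` and `π₁` is the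
conditional of `π̄` on `S₁` (EB2). -/
def ExtendedBayesianism {Ω : Type*} (m0 m1 : MeasurableSpace Ω)
    (π₀ : @Measure Ω m0) (π₁ : @Measure Ω m1) : Prop :=
  ∃ πb : @Measure Ω m1, @IsProbabilityMeasure Ω m1 πb ∧
    (∀ E : Set Ω, @MeasurableSet Ω m0 E → πb E = π₀ E) ∧
    (0 < outerM m0 π₀ (spt m1 π₁) →
      0 < πb (spt m1 π₁) ∧
      ∀ E : Set Ω, @MeasurableSet Ω m1 E →
        π₁ E = πb (E ∩ spt m1 π₁) / πb (spt m1 π₁))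

/-- `π₁` is commensurate to `π₀`: for all `E, F ∈ Σ₀` with `E ⊆ S₁`,
(C1) `π₀ F = 0 → π₁ F = 0` and (C2) `π₀ E * π₁ F ≤ π₁ E * π₀ F`. -/
def Commensurate {Ω : Type*} (m0 m1 : MeasurableSpace Ω)
    (π₀ : @Measure Ω m0) (π₁ : @Measure Ω m1) : Prop :=
  ∀ E F : Set Ω, @MeasurableSet Ω m0 E → @MeasurableSet Ω m0 F → E ⊆ spt m1 π₁ →
    (π₀ F = 0 → π₁ F = 0) ∧ π₀ E * π₁ F ≤ π₁ E * π₀ F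

/-- `π₁` is boundedly commensurate to `π₀`: commensurate, and in addition (C3)
`inf {π₀ F / π₁ F : F ∈ Σ₀, π₁ F > 0} > 0`. -/
def BoundedlyCommensurate {Ω : Type*} (m0 m1 : MeasurableSpace Ω)
    (π₀ : @Measure Ω m0) (π₁ : @Measure Ω m1) : Prop :=
  Commensurate m0 m1 π₀ π₁ ∧
    0 < ⨅ (F : Set Ω) (_ : @MeasurableSet Ω m0 F ∧ 0 < π₁ F), π₀ F / π₁ F

/-!
With a single σ-algebra (EB1) leaves `π̄ = π₀` as the only candidate, so extended Bayesianism says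
that `π₁` is `π₀` conditioned on `S₁` unless `π₀` vanishes on `S₁`. Mutually singular priors and
posteriors therefore satisfy it vacuously, whereas a prior concentrated on `S₁` must equal its
posterior. Passing through a `π₁` singular to both `π₀` and `π₂` thus allows a change within one
support that is not Bayesian in one step.
-/

open ProbabilityTheory

section Countable

variable {Ω : Type*} [Countable Ω] {m : MeasurableSpace Ω} {μ ν : Measure Ω}

theorem mutuallySingular_of_singleton (h : ∀ ω, μ {ω} = 0 ∨ ν {ω} = 0) : μ ⟂ₘ ν := by
  have h_null (ρ : Measure Ω) : ρ {ω | ρ {ω} = 0} = 0 :=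
    (measure_null_iff_singleton (to_countable _)).2 fun _ hω ↦ hω
  exact .mk (h_null μ) (h_null ν) fun ω _ ↦ h ω

theorem absolutelyContinuous_of_singleton (h : ∀ ω, ν {ω} = 0 → μ {ω} = 0) : μ ≪ ν :=
  fun s hs ↦ (measure_null_iff_singleton s.to_countable).2 fun ω hω ↦
    h ω (measure_mono_null (singleton_subset_iff.2 hω) hs)

end Countable

section Support

variable {Ω : Type*} {m : MeasurableSpace Ω} {π : Measure Ω}

theorem spt_subset {E : Set Ω} (hE : MeasurableSet E) (h : π E = 1) : spt m π ⊆ E :=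
  sInter_subset_of_mem ⟨hE, h⟩

theorem mem_spt_of_singleton_ne_zero [IsProbabilityMeasure π] {ω : Ω} (hω : π {ω} ≠ 0) :
    ω ∈ spt m π := by
  rintro E ⟨hE, hE1⟩
  by_contra hωE
  have hEc : π Eᶜ = 0 := (prob_compl_eq_zero_iff hE).2 hE1
  exact hω (measure_mono_null (singleton_subset_iff.2 hωE) hEc)

theorem ae_mem_spt [Countable Ω] [IsProbabilityMeasure π] : ∀ᵐ ω ∂π, ω ∈ spt m π :=
  ae_iff_of_countable.2 fun _ ↦ mem_spt_of_singleton_ne_zero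

theorem outerM_eq_apply (E : Set Ω) : outerM m π E = π E := by
  simp only [outerM, measure_eq_iInf E, iInf_and]
  exact iInf_congr fun _ ↦ iInf_comm

theorem measure_eq_one_of_ae_mem [IsProbabilityMeasure π] {S : Set Ω} (hS : ∀ᵐ ω ∂π, ω ∈ S) :
    π S = 1 :=
  (measure_congr (Filter.eventuallyEq_univ.2 hS)).trans measure_univ

theorem cond_eq_self_of_ae_mem [IsProbabilityMeasure π] {S : Set Ω} (hS : ∀ᵐ ω ∂π, ω ∈ S) :
    π[|S] = π := by
  rw [ProbabilityTheory.cond, measure_eq_one_of_ae_mem hS, inv_one, one_smul,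
    Measure.restrict_eq_self_of_ae_mem hS]

end Support

section SingleSigmaAlgebra

variable {Ω : Type*} {m : MeasurableSpace Ω} {π₀ π₁ π₂ : Measure Ω}

theorem extendedBayesianism_self_iff [IsProbabilityMeasure π₀] :
    ExtendedBayesianism m m π₀ π₁ ↔
      (π₀ (spt m π₁) ≠ 0 → π₁ = π₀[|spt m π₁]) := by
  have eq_cond_iff : π₁ = π₀[|spt m π₁] ↔
      ∀ E, MeasurableSet E → π₁ E = π₀ (E ∩ spt m π₁) / π₀ (spt m π₁) := by
    refine Measure.ext_iff.trans (forall₂_congr fun E hE ↦ ?_)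
    rw [cond_apply' hE, inter_comm, ENNReal.div_eq_inv_mul]
  rw [eq_cond_iff]
  constructor
  · rintro ⟨π', -, h_ext, h_cond⟩ h_ne
    obtain rfl : π' = π₀ := Measure.ext h_ext
    exact (h_cond (by rwa [outerM_eq_apply, pos_iff_ne_zero])).2
  · intro h
    refine ⟨π₀, inferInstance, fun _ _ ↦ rfl, fun h_pos ↦ ?_⟩
    rw [outerM_eq_apply] at h_pos
    exact ⟨h_pos, h h_pos.ne'⟩

theorem extendedBayesianism_of_mutuallySingular [IsProbabilityMeasure π₀]
    [IsProbabilityMeasure π₁] (h : π₀ ⟂ₘ π₁) : ExtendedBayesianism m m π₀ π₁ := by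
  obtain ⟨E, hE, hE₀, hE₁⟩ := h
  have spt_sub : spt m π₁ ⊆ E := spt_subset hE ((prob_compl_eq_zero_iff hE).1 hE₁)
  exact extendedBayesianism_self_iff.2 fun h_ne ↦ absurd (measure_mono_null spt_sub hE₀) h_ne

theorem ExtendedBayesianism.eq_of_absolutelyContinuous [Countable Ω] [IsProbabilityMeasure π₀]
    [IsProbabilityMeasure π₁] (h : ExtendedBayesianism m m π₀ π₁) (hac : π₀ ≪ π₁) :
    π₀ = π₁ := by
  have h_mem : ∀ᵐ ω ∂π₀, ω ∈ spt m π₁ := hac.ae_le ae_mem_spt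
  have h_ne : π₀ (spt m π₁) ≠ 0 := by simp [measure_eq_one_of_ae_mem h_mem]
  rw [extendedBayesianism_self_iff.1 h h_ne, cond_eq_self_of_ae_mem h_mem]

theorem no_composition_example_general [Countable Ω] [IsProbabilityMeasure π₀]
    [IsProbabilityMeasure π₁] [IsProbabilityMeasure π₂] (h₀₁ : π₀ ⟂ₘ π₁) (h₁₂ : π₁ ⟂ₘ π₂)
    (hac : π₀ ≪ π₂) (hne : π₀ ≠ π₂) :
    ExtendedBayesianism m m π₀ π₁ ∧ ExtendedBayesianism m m π₁ π₂ ∧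
      ¬ ExtendedBayesianism m m π₀ π₂ :=
  ⟨extendedBayesianism_of_mutuallySingular h₀₁, extendedBayesianism_of_mutuallySingular h₁₂,
    fun h ↦ hne (h.eq_of_absolutelyContinuous hac)⟩

end SingleSigmaAlgebra

/-- with `Ω = {ω₁, ω₂, ω₃}` (here `Fin 3`) and `Σ₀ = Σ₁ = Σ₂` the powerset,
`π₀ = (0, 1/3, 2/3)`, `π₁ = (1, 0, 0)`, `π₂ = (0, 2/3, 1/3)`, both `(π₀, π₁)` and
`(π₁, π₂)` satisfy extended Bayesianism, but `(π₀, π₂)` does not. -/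
theorem no_composition_example
    (π₀ π₁ π₂ : @Measure (Fin 3) ⊤)
    (h₀ : @IsProbabilityMeasure (Fin 3) ⊤ π₀)
    (h₁ : @IsProbabilityMeasure (Fin 3) ⊤ π₁)
    (h₂ : @IsProbabilityMeasure (Fin 3) ⊤ π₂)
    (h₀v : π₀ {0} = 0 ∧ π₀ {1} = 1 / 3 ∧ π₀ {2} = 2 / 3)
    (h₁v : π₁ {0} = 1 ∧ π₁ {1} = 0 ∧ π₁ {2} = 0)
    (h₂v : π₂ {0} = 0 ∧ π₂ {1} = 2 / 3 ∧ π₂ {2} = 1 / 3) :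
    ExtendedBayesianism ⊤ ⊤ π₀ π₁ ∧ ExtendedBayesianism ⊤ ⊤ π₁ π₂ ∧
      ¬ ExtendedBayesianism ⊤ ⊤ π₀ π₂ := by
  obtain ⟨h₀0, h₀1, h₀2⟩ := h₀v
  obtain ⟨h₁0, h₁1, h₁2⟩ := h₁v
  obtain ⟨h₂0, h₂1, h₂2⟩ := h₂v
  have h₀₁ : π₀ ⟂ₘ π₁ := mutuallySingular_of_singleton (by simp [Fin.forall_fin_succ, *])
  have h₁₂ : π₁ ⟂ₘ π₂ := mutuallySingular_of_singleton (by simp [Fin.forall_fin_succ, *])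
  have hac : π₀ ≪ π₂ := absolutelyContinuous_of_singleton (by simp [Fin.forall_fin_succ, *])
  have hne : π₀ ≠ π₂ := by
    rintro rfl
    have h := congrArg ENNReal.toReal (h₀1.symm.trans h₂1)
    norm_num at h
  exact no_composition_example_general h₀₁ h₁₂ hac hne
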